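/- arXiv:math/9607229 — 12 statements merged into one kernel-verified Lean document; each statement's English description precedes it below -/
import Mathlib

section
/- Let M be a meet-semilattice, m, n natural numbers, and f : (Fin m → M) → (Fin n → M) → M a function satisfying f (fun i => a i ⊓ b i) (fun j => c j ⊓ d j) = f a c ⊓ f b d for all a, b : Fin m → M and c, d : Fin n → M. Let 1 ∈ M be maximal. If f a c = 1 and f b d = 1, then f a d = 1 and f b c = 1. -/
/-- An operation compatible with a meet-semilattice operation rectangulates
at a maximal element (core of Theorem 2.8 (ii)⇒(i)). -/
theorem stmt_0 {M : Type*} [SemilatticeInf M] {m n : ℕ}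
    (f : (Fin m → M) → (Fin n → M) → M)
    (hf : ∀ (a b : Fin m → M) (c d : Fin n → M),
      f (fun i => a i ⊓ b i) (fun j => c j ⊓ d j) = f a c ⊓ f b d)
    (one : M) (hone : ∀ u : M, one ≤ u → u = one)
    (a b : Fin m → M) (c d : Fin n → M)
    (hac : f a c = one) (hbd : f b d = one) :
    f a d = one ∧ f b c = one := by 
  have h1 := hf a b c d
  have h2 := hf a b d c
  have e : (fun j => d j ⊓ c j) = (fun j => c j ⊓ d j) := funext fun j => inf_comm _ _
  rw [e, h1, hac, hbd, inf_idem] at h2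
  exact ⟨hone _ (h2.le.trans inf_le_left), hone _ (h2.le.trans inf_le_right)⟩
end

section
/- Let L be a first-order language and M an L-structure carrying a SemilatticeInf instance such that ⊓ is a compatible semilattice operation of M. Let 1 ∈ M be maximal. Then for every L-term t whose variables are indexed by (Fin m ⊕ Fin n) ⊕ Fin k, every parameter tuple w : Fin k → M, and all tuples a, b : Fin m → M and c, d : Fin n → M: if t.realize (Sum.elim (Sum.elim a c) w) = 1 and t.realize (Sum.elim (Sum.elim b d) w) = 1, then t.realize (Sum.elim (Sum.elim a d) w) = 1 and t.realize (Sum.elim (Sum.elim b c) w) = 1. -/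
open FirstOrder Language Structure

theorem realize_inf_aux {L : Language} {M : Type*} [L.Structure M] [SemilatticeInf M]
    (hcompat : ∀ (n : ℕ) (g : L.Functions n) (a b : Fin n → M),
      funMap g (fun i => a i ⊓ b i) = funMap g a ⊓ funMap g b)
    {α : Type*} (t : L.Term α) (u v : α → M) :
    t.realize (fun i => u i ⊓ v i) = t.realize u ⊓ t.realize v := by
  induction t with
  | var x => rfl
  | func f ts ih =>
    simp only [Term.realize_func, ih]
    exact hcompat _ f _ _

theorem realize_mono_aux {L : Language} {M : Type*} [L.Structure M] [SemilatticeInf M]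
    (hcompat : ∀ (n : ℕ) (g : L.Functions n) (a b : Fin n → M),
      funMap g (fun i => a i ⊓ b i) = funMap g a ⊓ funMap g b)
    {α : Type*} (t : L.Term α) (u v : α → M) (h : ∀ i, u i ≤ v i) :
    t.realize u ≤ t.realize v := by
  have h1 := realize_inf_aux hcompat t u v
  have h2 : (fun i => u i ⊓ v i) = u := funext fun i => inf_eq_left.2 (h i)
  rw [h2] at h1
  exact inf_eq_left.1 h1.symm

/-- All polynomial operations of a structure with a compatible semilattice
operation rectangulate at a maximal element (Theorem 2.8 (ii)⇒(i)). -/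
theorem stmt_1 {L : Language} {M : Type*} [L.Structure M] [SemilatticeInf M]
    (hcompat : ∀ (n : ℕ) (g : L.Functions n) (a b : Fin n → M),
      funMap g (fun i => a i ⊓ b i) = funMap g a ⊓ funMap g b)
    (one : M) (hone : ∀ u : M, one ≤ u → u = one)
    {m n k : ℕ} (t : L.Term ((Fin m ⊕ Fin n) ⊕ Fin k))
    (w : Fin k → M) (a b : Fin m → M) (c d : Fin n → M)
    (h1 : t.realize (Sum.elim (Sum.elim a c) w) = one)
    (h2 : t.realize (Sum.elim (Sum.elim b d) w) = one) :
    t.realize (Sum.elim (Sum.elim a d) w) = one ∧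
      t.realize (Sum.elim (Sum.elim b c) w) = one := by
  have key := realize_inf_aux hcompat t (Sum.elim (Sum.elim a c) w) (Sum.elim (Sum.elim b d) w)
  rw [h1, h2, inf_idem] at key
  constructor
  · apply hone
    rw [← key]
    apply realize_mono_aux hcompat
    rintro ((i | i) | i) <;> simp
  · apply hone
    rw [← key]
    apply realize_mono_aux hcompat
    rintro ((i | i) | i) <;> simp
end

section
/- Let M be a meet-semilattice and p : M → M → M a binary operation that is idempotent (p a a = a), commutative (p a b = p b a), and compatible with ⊓ in the sense that p (a ⊓ b) (c ⊓ d) = p a c ⊓ p b d for all a, b, c, d. Then p a b = a ⊓ b for all a, b ∈ M. -/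
/-- Lemma 2.5: every idempotent commutative binary operation compatible with
a compatible semilattice operation ⊓ coincides with ⊓. -/
theorem stmt_2 {M : Type*} [SemilatticeInf M] (p : M → M → M)
    (hidem : ∀ a : M, p a a = a)
    (hcomm : ∀ a b : M, p a b = p b a)
    (hcompat : ∀ a b c d : M, p (a ⊓ b) (c ⊓ d) = p a c ⊓ p b d) :
    ∀ a b : M, p a b = a ⊓ b := by
  intro a b
  have h := hcompat a b b a
  rw [inf_comm b a, hidem, hcomm b a, inf_idem] at h
  exact h.symm
end

section
/- Let M be a type and p, q : M → M → M two semilattice operations on M (each idempotent, commutative, and associative). If p is compatible with q, i.e. q (p a c) (p b d) = p (q a b) (q c d) for all a, b, c, d ∈ M, then p = q. -/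
/-- Corollary 2.6: an algebra has at most one compatible semilattice
operation. -/
theorem stmt_3 {M : Type*} (p q : M → M → M)
    (hpi : ∀ a : M, p a a = a) (hpc : ∀ a b : M, p a b = p b a)
    (hpa : ∀ a b c : M, p (p a b) c = p a (p b c))
    (hqi : ∀ a : M, q a a = a) (hqc : ∀ a b : M, q a b = q b a)
    (hqa : ∀ a b c : M, q (q a b) c = q a (q b c))
    (hcompat : ∀ a b c d : M, q (p a c) (p b d) = p (q a b) (q c d)) :
    p = q := by
  funext x y
  have h := hcompat x y y x
  rw [hpc y x, hqc y x, hqi, hpi] at h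
  exact h
end

section
/- Let L be a first-order language and M a nonempty L-structure that is idempotent and carries a SemilatticeSup instance such that ⊔ is a compatible semilattice operation of M (funMap g (fun i => a i ⊔ b i) = funMap g a ⊔ funMap g b for every function symbol g) and ⊔ is a term operation of M (there is an L-term t : L.Term (Fin 2) with t.realize ![x, y] = x ⊔ y for all x, y). Assume M is subdirectly irreducible: there is a congruence μ of M with μ ≠ the equality relation such that μ ⊆ θ for every congruence θ of M other than equality. Then: (1) M has a least element 0 (0 ≤ x for all x); (2) there is an element u with 0 < u such that u ≤ x for every x ≠ 0; (3) μ relates x and y if and only if x = y or {x, y} = {0, u}. -/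
open FirstOrder Language Structure

/-- Theorem 6.1 (1)–(3): the structure of idempotent subdirectly irreducible
algebras with a compatible join-semilattice term operation. -/
theorem stmt_5 {L : Language} {M : Type*} [L.Structure M] [Nonempty M] [SemilatticeSup M]
    (hidem : ∀ (n : ℕ) (g : L.Functions n) (a : M), funMap g (fun _ : Fin n => a) = a)
    (hcompat : ∀ (n : ℕ) (g : L.Functions n) (a b : Fin n → M),
      funMap g (fun i => a i ⊔ b i) = funMap g a ⊔ funMap g b)
    (hterm : ∃ t : L.Term (Fin 2), ∀ x y : M, t.realize ![x, y] = x ⊔ y)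
    (μ : M → M → Prop)
    (hμequiv : Equivalence μ)
    (hμcong : ∀ (n : ℕ) (g : L.Functions n) (a b : Fin n → M),
      (∀ i, μ (a i) (b i)) → μ (funMap g a) (funMap g b))
    (hμne : μ ≠ (· = ·))
    (hmono : ∀ θ : M → M → Prop, Equivalence θ →
      (∀ (n : ℕ) (g : L.Functions n) (a b : Fin n → M),
        (∀ i, θ (a i) (b i)) → θ (funMap g a) (funMap g b)) →
      θ ≠ (· = ·) → ∀ x y : M, μ x y → θ x y) :
    ∃ z u : M, (∀ x : M, z ≤ x) ∧ z < u ∧ (∀ x : M, x ≠ z → u ≤ x) ∧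
      (∀ x y : M, μ x y ↔ x = y ∨ ({x, y} : Set M) = {z, u}) := by
  have key : ∀ a : M, (¬ ∀ x, a ≤ x) → ∀ x y, μ x y → x ⊔ a = y ⊔ a := by
    intro a ha
    refine hmono (fun x y => x ⊔ a = y ⊔ a)
      ⟨fun _ => rfl, fun h => h.symm, fun h h' => h.trans h'⟩ ?_ ?_
    · intro n g p q h
      have e : ∀ p : Fin n → M, funMap g p ⊔ a = funMap g (fun i => p i ⊔ a) := by
        intro p
        rw [hcompat n g p (fun _ => a), hidem n g a]
      show funMap g p ⊔ a = funMap g q ⊔ a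
      rw [e, e]
      congr 1
      funext i
      exact h i
    · intro heq
      apply ha
      intro x
      have h := congrFun (congrFun heq x) (x ⊔ a)
      have h2 : x = x ⊔ a := by
        rw [← h]
        simp
      rw [h2]
      exact le_sup_right
  have both : ∀ x y, μ x y → x ≠ y → (∀ w, x ≤ w) ∨ (∀ w, y ≤ w) := by
    intro x y hxy hne
    by_contra hcon
    rw [not_or] at hcon
    have h1 := key x hcon.1 x y hxy
    have h2 := key y hcon.2 x y hxy
    rw [sup_idem] at h1 h2
    exact hne (h1.trans ((sup_comm y x).trans h2))
  have exne : ∃ x y, μ x y ∧ x ≠ y := by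
    by_contra hcon
    push Not at hcon
    apply hμne
    funext x y
    exact propext ⟨hcon x y, fun h => h ▸ hμequiv.refl x⟩
  have exz : ∃ z u, μ z u ∧ z ≠ u ∧ ∀ w, z ≤ w := by
    obtain ⟨x, y, hxy, hne⟩ := exne
    rcases both x y hxy hne with h | h
    · exact ⟨x, y, hxy, hne, h⟩
    · exact ⟨y, x, hμequiv.symm hxy, hne.symm, h⟩
  obtain ⟨z, u, hzu, hne, hz⟩ := exz
  have atom : ∀ v, μ z v → ∀ x, x ≠ z → v ≤ x := by
    intro v hv x hx
    have h := key x (fun h => hx (le_antisymm (h z) (hz x))) z v hv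
    rw [sup_eq_right.mpr (hz x)] at h
    rw [h]
    exact le_sup_left
  have uniq : ∀ v, μ z v → z ≠ v → v = u := fun v hv hzv =>
    le_antisymm (atom v hv u hne.symm) (atom u hzu v hzv.symm)
  refine ⟨z, u, hz, lt_of_le_of_ne (hz u) hne, atom u hzu, fun x y => ⟨fun hxy => ?_, ?_⟩⟩
  · by_cases e : x = y
    · exact Or.inl e
    · right
      rcases both x y hxy e with h | h
      · obtain rfl : x = z := le_antisymm (h z) (hz x)
        rw [uniq y hxy e]
      · obtain rfl : y = z := le_antisymm (h z) (hz y)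
        rw [uniq x (hμequiv.symm hxy) (Ne.symm e), Set.pair_comm]
  · rintro (rfl | h)
    · exact hμequiv.refl x
    · rcases Set.pair_eq_pair_iff.mp h with ⟨rfl, rfl⟩ | ⟨rfl, rfl⟩
      · exact hzu
      · exact hμequiv.symm hzu
end

section
/- Let L be a first-order language and M an L-structure that is idempotent and carries a SemilatticeSup instance such that ⊔ is a compatible semilattice operation of M and ⊔ is a term operation of M (there is an L-term t : L.Term (Fin 2) with t.realize ![x, y] = x ⊔ y for all x, y). Let N be a substructure of M (a subset closed under all funMaps, with the induced L-structure). Then every congruence θ of N extends to M: there is a congruence Θ of M such that for all a, b ∈ N, Θ a b if and only if θ a b. -/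
open FirstOrder Language Structure

theorem aux_idem {L : Language} {M : Type*} [L.Structure M]
    (hidem : ∀ (n : ℕ) (g : L.Functions n) (a : M), funMap g (fun _ : Fin n => a) = a)
    {α : Type*} (t : L.Term α) (a : M) : t.realize (fun _ => a) = a := by
  induction t with
  | var => rfl
  | func g ts ih => simp only [Term.realize_func, ih, hidem]

theorem aux_compat {L : Language} {M : Type*} [L.Structure M] [SemilatticeSup M]
    (hcompat : ∀ (n : ℕ) (g : L.Functions n) (a b : Fin n → M),
      funMap g (fun i => a i ⊔ b i) = funMap g a ⊔ funMap g b)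
    {α : Type*} (t : L.Term α) (v w : α → M) :
    t.realize (fun i => v i ⊔ w i) = t.realize v ⊔ t.realize w := by
  induction t with
  | var => rfl
  | func g ts ih => simp only [Term.realize_func, ih, hcompat]

theorem aux_cong {L : Language} {N : Type*} [L.Structure N] (θ : N → N → Prop)
    (hθcong : ∀ (n : ℕ) (g : L.Functions n) (a b : Fin n → N),
      (∀ i, θ (a i) (b i)) → θ (funMap g a) (funMap g b))
    {α : Type*} (t : L.Term α) (v w : α → N) (h : ∀ i, θ (v i) (w i)) :
    θ (t.realize v) (t.realize w) := by
  induction t with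
  | var i => exact h i
  | func g ts ih => exact hθcong _ g _ _ ih

/-- Environment for a unary polynomial. -/
def auxEnv {M : Type*} (x : M) : Option M → M := fun o => o.elim x id

/-- Theorem 6.7: an idempotent algebra with a compatible semilattice term
operation has the congruence extension property. -/
theorem stmt_6 {L : Language} {M : Type*} [L.Structure M] [SemilatticeSup M]
    (hidem : ∀ (n : ℕ) (g : L.Functions n) (a : M), funMap g (fun _ : Fin n => a) = a)
    (hcompat : ∀ (n : ℕ) (g : L.Functions n) (a b : Fin n → M),
      funMap g (fun i => a i ⊔ b i) = funMap g a ⊔ funMap g b)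
    (hterm : ∃ t : L.Term (Fin 2), ∀ x y : M, t.realize ![x, y] = x ⊔ y)
    (N : L.Substructure M)
    (θ : N → N → Prop)
    (hθequiv : Equivalence θ)
    (hθcong : ∀ (n : ℕ) (g : L.Functions n) (a b : Fin n → N),
      (∀ i, θ (a i) (b i)) → θ (funMap g a) (funMap g b)) :
    ∃ Θ : M → M → Prop, Equivalence Θ ∧
      (∀ (n : ℕ) (g : L.Functions n) (a b : Fin n → M),
        (∀ i, Θ (a i) (b i)) → Θ (funMap g a) (funMap g b)) ∧
      (∀ a b : N, Θ (a : M) (b : M) ↔ θ a b) := by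
  classical
  obtain ⟨s, hs⟩ := hterm
  let S : N → N → N := fun x y => s.realize ![x, y]
  have hcoe : ∀ {α : Type _} (t : L.Term α) (v : α → N),
      ((t.realize v : N) : M) = t.realize (fun i => (v i : M)) := by
    intro α t v
    exact (HomClass.realize_term N.subtype (t := t) (v := v)).symm
  have hS : ∀ x y : N, ((S x y : N) : M) = (x : M) ⊔ y := by
    intro x y
    rw [← hs]
    have h := (HomClass.realize_term N.subtype (t := s) (v := ![x, y])).symm
    refine h.trans ?_
    congr 1
    funext i
    fin_cases i <;> rfl
  have hSθ : ∀ x x' y y' : N, θ x x' → θ y y' → θ (S x y) (S x' y') := by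
    intro x x' y y' h h'
    refine aux_cong θ hθcong s _ _ ?_
    intro i
    fin_cases i
    · exact h
    · exact h'
  have hmono : ∀ {α : Type _} (t : L.Term α) (v w : α → M), (∀ i, v i ≤ w i) →
      t.realize v ≤ t.realize w := by
    intro α t v w h
    have h1 := aux_compat hcompat t v w
    have h2 : (fun i => v i ⊔ w i) = w := funext fun i => sup_eq_right.2 (h i)
    rw [h2] at h1
    rw [h1]
    exact le_sup_left
  let I : N → M → Prop := fun c z => ∃ n : N, z ≤ n ∧ θ n c
  let Θ : M → M → Prop := fun x y => ∀ (t : L.Term (Option M)) (c : N),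
    I c (t.realize (auxEnv x)) ↔ I c (t.realize (auxEnv y))
  have hrefl : ∀ x, Θ x x := fun x t c => Iff.rfl
  have hsymm : ∀ {x y}, Θ x y → Θ y x := fun h t c => (h t c).symm
  have htrans : ∀ {x y z}, Θ x y → Θ y z → Θ x z := fun h h' t c => (h t c).trans (h' t c)
  have hstep : ∀ (n : ℕ) (g : L.Functions n) (m : Fin n → M) (i : Fin n) (x y : M), Θ x y →
      Θ (funMap g (Function.update m i x)) (funMap g (Function.update m i y)) := by
    intro n g m i x y h t c
    let σ : Option M → L.Term (Option M) := fun o => o.elim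
      (Term.func g (fun j => if j = i then Term.var none else Term.var (some (m j))))
      (fun z => Term.var (some z))
    have key : ∀ z, (t.subst σ).realize (auxEnv z)
        = t.realize (auxEnv (funMap g (Function.update m i z))) := by
      intro z
      rw [Term.realize_subst]
      congr 1
      funext o
      cases o with
      | none =>
        simp only [σ, auxEnv, Option.elim, Term.realize_func]
        congr 1
        funext j
        by_cases hj : j = i
        · subst hj; simp [auxEnv]
        · simp [hj, auxEnv]
      | some z => simp [σ, auxEnv]
    rw [← key, ← key]
    exact h _ c
  have hfwd : ∀ a b : N, θ a b → ∀ (t : L.Term (Option M)) (c : N),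
      I c (t.realize (auxEnv (a : M))) → I c (t.realize (auxEnv (b : M))) := by
    rintro a b hab t c ⟨n, hn, hnc⟩
    -- value at `a ⊔ n`, parameters joined with `n`
    have e1 : t.realize (fun o => auxEnv (a : M) o ⊔ (n : M)) = n := by
      rw [aux_compat hcompat t, aux_idem hidem t]
      exact sup_eq_right.2 hn
    let v : N → Option M → N := fun x o => o.elim (S x n) (fun _ => n)
    have hv : ∀ x : N, ∀ o, (v x o : M) ≤ auxEnv (x : M) o ⊔ (n : M) := by
      intro x o
      cases o with
      | none => exact (hS x n).le
      | some z => exact le_sup_right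
    have hnv : ∀ x : N, ∀ o, (n : M) ≤ v x o := by
      intro x o
      cases o with
      | none => exact le_sup_right.trans (hS x n).ge
      | some z => exact le_rfl
    have e2 : t.realize (v a) = n := by
      apply Subtype.ext
      rw [hcoe]
      apply le_antisymm
      · exact (hmono t _ _ (hv a)).trans e1.le
      · have := hmono t _ _ (hnv a)
        rwa [aux_idem hidem t] at this
    refine ⟨t.realize (v b), ?_, ?_⟩
    · rw [hcoe]
      let w : Option M → M := fun o => o.elim (n : M) (fun z => z ⊔ n)
      have e3 : t.realize w ≤ n := by
        refine (hmono t _ _ ?_).trans e1.le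
        intro o
        cases o with
        | none => exact le_sup_right
        | some z => exact le_rfl
      have e4 : (n : M) ≤ t.realize (fun o => (v b o : M)) := by
        have := hmono t _ _ (hnv b)
        rwa [aux_idem hidem t] at this
      have e5 : t.realize (auxEnv (b : M)) ≤ t.realize (fun o => (v b o : M) ⊔ w o) := by
        apply hmono
        intro o
        cases o with
        | none => exact (le_sup_left.trans (hS b n).ge).trans le_sup_left
        | some z => exact (le_sup_left : z ≤ z ⊔ (n : M)).trans le_sup_right
      rw [aux_compat hcompat t] at e5
      exact e5.trans (sup_le le_rfl (e3.trans e4))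
    · refine hθequiv.trans ?_ hnc
      have h := aux_cong θ hθcong t (v b) (v a) (by
        intro o
        cases o with
        | none => exact hSθ _ _ _ _ (hθequiv.symm hab) (hθequiv.refl n)
        | some z => exact hθequiv.refl n)
      rwa [e2] at h
  refine ⟨Θ, ⟨hrefl, hsymm, htrans⟩, ?_, ?_⟩
  · intro n g a b h
    have H : ∀ F : Finset (Fin n), Θ (funMap g a) (funMap g (F.piecewise b a)) := by
      intro F
      induction F using Finset.induction_on with
      | empty => simpa using hrefl _
      | insert i F hi ih =>
        refine htrans ih ?_
        rw [Finset.piecewise_insert]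
        have h1 := hstep n g (F.piecewise b a) i (a i) (b i) (h i)
        have h2 : Function.update (F.piecewise b a) i (a i) = F.piecewise b a := by
          rw [Function.update_eq_self_iff]
          simp [hi]
        rwa [h2] at h1
    simpa using H Finset.univ
  · intro a b
    constructor
    · intro h
      have half : ∀ a b : N, Θ a b → θ a (S a b) := by
        intro a b h
        obtain ⟨n, hn, hna⟩ := (h (Term.var none) a).1 ⟨a, le_rfl, hθequiv.refl a⟩
        have e : S n b = n := by
          apply Subtype.ext
          rw [hS]
          exact sup_eq_left.2 hn
        have h1 := hSθ n a b b hna (hθequiv.refl b)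
        rw [e] at h1
        exact hθequiv.trans (hθequiv.symm hna) h1
      have hc : S a b = S b a := by
        apply Subtype.ext
        rw [hS, hS, sup_comm]
      have h1 := half a b h
      have h2 := half b a (hsymm h)
      rw [← hc] at h2
      exact hθequiv.trans h1 (hθequiv.symm h2)
    · intro h t c
      exact ⟨hfwd a b h t c, hfwd b a (hθequiv.symm h) t c⟩
end

section
/- Let M be a finite nonempty meet-semilattice, t : (Fin m → M) → M a ⊓-homomorphism, and i, j : Fin m. Assume that every least preimage has equal i-th and j-th coordinates: for every b : Fin m → M such that (for all c, t c = t b implies b k ≤ c k for all k), we have b i = b j. Then for every x : Fin m → M, t x = t (Function.update (Function.update x i (x i ⊓ x j)) j (x i ⊓ x j)). -/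
/-- variable-collapsing step of Lemma 4.1: if two variables agree in all
least preimages, both may be replaced by their meet without changing the value of `t`. -/
theorem stmt_10 {M : Type*} [SemilatticeInf M] [Fintype M] [Nonempty M] {m : ℕ}
    (t : (Fin m → M) → M)
    (ht : ∀ x y : Fin m → M, t (fun i => x i ⊓ y i) = t x ⊓ t y)
    (i j : Fin m)
    (hij : ∀ b : Fin m → M, (∀ c : Fin m → M, t c = t b → ∀ k, b k ≤ c k) → b i = b j)
    (x : Fin m → M) :
    t x = t (Function.update (Function.update x i (x i ⊓ x j)) j (x i ⊓ x j)) := by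
  have mono : ∀ a b : Fin m → M, (∀ k, a k ≤ b k) → t a ≤ t b := by
    intro a b h
    have h1 := ht a b
    have h2 : (fun k => a k ⊓ b k) = a := funext fun k => inf_eq_left.mpr (h k)
    rw [h2] at h1
    exact inf_eq_left.mp h1.symm
  obtain ⟨b, hb⟩ := (Set.toFinite {c : Fin m → M | t c = t x}).exists_minimal ⟨x, rfl⟩
  have hbx : t b = t x := hb.prop
  have least : ∀ c : Fin m → M, t c = t b → ∀ k, b k ≤ c k := by
    intro c hc k
    have h1 : t (fun k => b k ⊓ c k) = t x := by rw [ht, hc, inf_idem, hbx]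
    have h2 : b ≤ fun k => b k ⊓ c k := hb.le_of_le h1 (fun k => inf_le_left)
    exact (h2 k).trans inf_le_right
  have e := hij b least
  have hle := least x hbx.symm
  have hi : b i ≤ x i ⊓ x j := le_inf (hle i) (e ▸ hle j)
  apply le_antisymm
  · rw [← hbx]
    apply mono
    intro k
    by_cases hkj : k = j
    · subst hkj
      simpa [← e] using hi
    · by_cases hki : k = i
      · subst hki
        simpa [hkj] using hi
      · simpa [hkj, hki] using hle k
  · apply mono
    intro k
    by_cases hkj : k = j
    · subst hkj
      simp
    · by_cases hki : k = i
      · subst hki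
        simp [hkj]
      · simp [hkj, hki]
end

section
/- Let M be a finite nonempty meet-semilattice and t : (Fin m → M) → M a ⊓-homomorphism. Then there is an equivalence relation s on Fin m whose quotient has at most (Fintype.card M) ^ (Fintype.card M) elements, such that for every x : Fin m → M, t x = t (fun i => the infimum of x j over all j equivalent to i under s) (the infimum is a Finset.inf' over the s-class of i, which contains i and hence is nonempty). -/
open scoped Classical in
/-- Lemma 4.1: a ⊓-homomorphism on a finite meet-semilattice factors, up to
identifying each block of a partition with the meet of its variables, through an operation
of arity at most |M|^|M|. -/
theorem stmt_11 {M : Type*} [SemilatticeInf M] [Fintype M] [Nonempty M] {m : ℕ}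
    (t : (Fin m → M) → M)
    (ht : ∀ x y : Fin m → M, t (fun i => x i ⊓ y i) = t x ⊓ t y) :
    ∃ s : Setoid (Fin m),
      Nat.card (Quotient s) ≤ Fintype.card M ^ Fintype.card M ∧
      ∀ x : Fin m → M,
        t x = t (fun i => (Finset.univ.filter (fun j => s.r i j)).inf'
          ⟨i, Finset.mem_filter.mpr ⟨Finset.mem_univ i, s.iseqv.refl i⟩⟩ x) := by
  have mono : ∀ x y : Fin m → M, x ≤ y → t x ≤ t y := by
    intro x y h
    have h1 : (fun i => x i ⊓ y i) = x := funext fun i => inf_eq_left.mpr (h i)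
    have h2 := ht x y
    rw [h1] at h2
    exact inf_eq_left.mp h2.symm
  -- for each value `p` of `t`, the least tuple mapped to `p`
  have hL : ∀ p : M, ∃ l : Fin m → M, ∀ x, t x = p → p ≤ t l ∧ l ≤ x := by
    intro p
    by_cases hp : ∃ x, t x = p
    · obtain ⟨x₀, hx₀⟩ := hp
      have hne : (Finset.univ.filter (fun x => t x = p)).Nonempty := ⟨x₀, by simp [hx₀]⟩
      refine ⟨(Finset.univ.filter (fun x => t x = p)).inf' hne id, fun x hx => ⟨?_, ?_⟩⟩
      · refine Finset.inf'_induction (p := fun z => p ≤ t z) hne id ?_ ?_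
        · intro a ha b hb
          exact (le_inf ha hb).trans (ht a b).ge
        · intro b hb
          exact (Finset.mem_filter.mp hb).2.ge
      · exact Finset.inf'_le id (by simp [hx])
    · obtain ⟨a⟩ := (inferInstance : Nonempty M)
      exact ⟨fun _ => a, fun x hx => absurd ⟨x, hx⟩ hp⟩
  choose L hL using hL
  let g : Fin m → (M → M) := fun i p => L p i
  refine ⟨Setoid.ker g, ?_, fun x => le_antisymm ?_ ?_⟩
  · have h := Nat.card_le_card_of_injective _ (Setoid.kerLift_injective g)
    simpa using h
  · obtain ⟨h1, h2⟩ := hL (t x) x rfl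
    refine h1.trans (mono _ _ fun i => Finset.le_inf' _ _ fun j hj => ?_)
    have h3 : g i = g j := (Finset.mem_filter.mp hj).2
    have h4 : L (t x) i = L (t x) j := congrFun h3 (t x)
    exact h4.le.trans (h2 j)
  · exact mono _ _ fun i => Finset.inf'_le x
      (Finset.mem_filter.mpr ⟨Finset.mem_univ i, (Setoid.ker g).iseqv.refl i⟩)
end

section
/- Let M be a meet-semilattice, 1 ∈ M a maximal element, k a natural number, and t : M → (Fin k → M) → M a function satisfying t (u ⊓ v) (fun i => b i ⊓ b' i) = t u b ⊓ t v b' for all u, v ∈ M and b, b' : Fin k → M. If t u b = 1 and t v b' = 1, then t v b = 1 and t u b' = 1. -/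
/-- key computation in Theorem 5.1: if some parameter tuple sends u to the
maximal element 1 and some tuple sends v to 1, then the tuples can be exchanged. -/
theorem stmt_12 {M : Type*} [SemilatticeInf M] (one : M)
    (hone : ∀ u : M, one ≤ u → u = one)
    {k : ℕ} (t : M → (Fin k → M) → M)
    (ht : ∀ (u v : M) (b b' : Fin k → M),
      t (u ⊓ v) (fun i => b i ⊓ b' i) = t u b ⊓ t v b')
    (u v : M) (b b' : Fin k → M)
    (h1 : t u b = one) (h2 : t v b' = one) :
    t v b = one ∧ t u b' = one := by
  have h3 : t v b ⊓ t u b' = one := by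
    rw [← ht, inf_comm v u, ht, h1, h2, inf_idem]
  exact ⟨hone _ (h3 ▸ inf_le_left), hone _ (h3 ▸ inf_le_right)⟩
end

section
/- Let M be a meet-semilattice, 1 ∈ M a maximal element, P a type, k a natural number, and t : P → M → (Fin k → M) → M a family of functions such that for every p : P, t p (u ⊓ v) (fun i => b i ⊓ b' i) = t p u b ⊓ t p v b' for all u, v, b, b'. Assume the family separates points relative to 1: for all u ≠ v in M there exist p : P and b : Fin k → M with either (t p u b = 1 and t p v b ≠ 1) or (t p u b ≠ 1 and t p v b = 1). Then the map sending u ∈ M to the set {p : P | ∃ b, t p u b = 1} is injective; in particular, if P is finite then M has at most 2 ^ (Fintype.card P) elements. -/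
/-- central argument of Theorem 5.1: the map u ↦ S_u = {p : some parameter
tuple sends u to 1} is injective; hence |M| ≤ 2^|P| when P is finite. -/
theorem stmt_13 {M : Type*} [SemilatticeInf M] (one : M)
    (hone : ∀ u : M, one ≤ u → u = one)
    (P : Type*) {k : ℕ} (t : P → M → (Fin k → M) → M)
    (ht : ∀ (p : P) (u v : M) (b b' : Fin k → M),
      t p (u ⊓ v) (fun i => b i ⊓ b' i) = t p u b ⊓ t p v b')
    (hsep : ∀ u v : M, u ≠ v → ∃ (p : P) (b : Fin k → M),
      (t p u b = one ∧ t p v b ≠ one) ∨ (t p u b ≠ one ∧ t p v b = one)) :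
    Function.Injective (fun u : M => {p : P | ∃ b : Fin k → M, t p u b = one}) ∧
      ∀ (hP : Fintype P), Nat.card M ≤ 2 ^ (@Fintype.card P hP) := by
  have key : ∀ (p : P) (u v : M) (b b' : Fin k → M),
      t p u b = one → t p v b' = one → t p v b = one := by
    intro p u v b b' h1 h2
    apply hone
    have h3 := ht p u v b b'
    rw [h1, h2, inf_idem] at h3
    have h4 := ht p (u ⊓ v) v (fun i => b i ⊓ b' i) b
    have e1 : u ⊓ v ⊓ v = u ⊓ v := by simp
    have e2 : (fun i => (fun i => b i ⊓ b' i) i ⊓ b i) = fun i => b i ⊓ b' i := by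
      funext i
      exact inf_eq_left.mpr inf_le_left
    rw [e1, e2, h3] at h4
    exact inf_eq_left.mp h4.symm
  have inj : Function.Injective
      (fun u : M => {p : P | ∃ b : Fin k → M, t p u b = one}) := by
    intro u v huv
    by_contra hne
    obtain ⟨p, b, h⟩ := hsep u v hne
    have hiff : (∃ b : Fin k → M, t p u b = one) ↔ ∃ b : Fin k → M, t p v b = one :=
      Set.ext_iff.mp huv p
    rcases h with ⟨h1, h2⟩ | ⟨h1, h2⟩
    · obtain ⟨b', hb'⟩ := hiff.mp ⟨b, h1⟩
      exact h2 (key p u v b b' h1 hb')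
    · obtain ⟨b', hb'⟩ := hiff.mpr ⟨b, h2⟩
      exact h1 (key p v u b b' h2 hb')
  refine ⟨inj, fun hP => ?_⟩
  have h := Nat.card_le_card_of_injective _ inj
  rwa [Nat.card_eq_fintype_card (α := Set P), Fintype.card_set] at h
end

section
/- Let M be a meet-semilattice with a top element ⊤, and let t : M → M → M be idempotent (t x x = x) and compatible with ⊓ (t (a ⊓ b) (c ⊓ d) = t a c ⊓ t b d for all a, b, c, d). Then for all x, y ∈ M: (1) t x y = t x ⊤ ⊓ t ⊤ y; (2) x ≤ t x ⊤ and x ≤ t ⊤ x; (3) the maps x ↦ t x ⊤ and y ↦ t ⊤ y are ⊓-endomorphisms: t (a ⊓ b) ⊤ = t a ⊤ ⊓ t b ⊤ and t ⊤ (a ⊓ b) = t ⊤ a ⊓ t ⊤ b. -/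
/-- decomposition step of Lemma 3.6: every binary idempotent operation
compatible with ⊓ on a meet-semilattice with ⊤ has the form t(x,y) = α(x) ⊓ β(y) with
α, β increasing ⊓-endomorphisms. -/
theorem stmt_15 {M : Type*} [SemilatticeInf M] [OrderTop M]
    (t : M → M → M) (hid : ∀ x : M, t x x = x)
    (hc : ∀ a b c d : M, t (a ⊓ b) (c ⊓ d) = t a c ⊓ t b d) :
    (∀ x y : M, t x y = t x ⊤ ⊓ t ⊤ y) ∧
    (∀ x : M, x ≤ t x ⊤ ∧ x ≤ t ⊤ x) ∧
    (∀ a b : M, t (a ⊓ b) ⊤ = t a ⊤ ⊓ t b ⊤ ∧ t ⊤ (a ⊓ b) = t ⊤ a ⊓ t ⊤ b) := by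
  have h1 : ∀ x y : M, t x y = t x ⊤ ⊓ t ⊤ y := fun x y => by
    rw [← hc, inf_top_eq, top_inf_eq]
  refine ⟨h1, fun x => ?_, fun a b => ⟨?_, ?_⟩⟩
  · have h : x = t x ⊤ ⊓ t ⊤ x := (hid x).symm.trans (h1 x x)
    exact ⟨h.le.trans inf_le_left, h.le.trans inf_le_right⟩
  · rw [← hc, inf_top_eq]
  · rw [← hc, inf_top_eq]
end

section
/- Let M be a meet-semilattice and α, β : M → M be ⊓-endomorphisms (α (a ⊓ b) = α a ⊓ α b and β (a ⊓ b) = β a ⊓ β b) with α ∘ α = α, β ∘ β = β, and α x ⊓ β x = x for all x ∈ M. Then for all x, y ∈ M: α (α x ⊓ β y) ⊓ β (α y ⊓ β x) = x ⊓ (α (β y) ⊓ β (α y)). -/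
/-- computation of s(x,y) = t''(t''(x,y), t''(y,x)) in Lemma 3.6. -/
theorem stmt_16 {M : Type*} [SemilatticeInf M] (α β : M → M)
    (hα : ∀ a b : M, α (a ⊓ b) = α a ⊓ α b)
    (hβ : ∀ a b : M, β (a ⊓ b) = β a ⊓ β b)
    (hα2 : α ∘ α = α) (hβ2 : β ∘ β = β)
    (h : ∀ x : M, α x ⊓ β x = x) :
    ∀ x y : M, α (α x ⊓ β y) ⊓ β (α y ⊓ β x) = x ⊓ (α (β y) ⊓ β (α y)) := by 
  intro x y
  have h1 : α (α x) = α x := congrFun hα2 x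
  have h2 : β (β x) = β x := congrFun hβ2 x
  rw [hα, hβ, h1, h2, inf_comm (β (α y)) (β x), inf_inf_inf_comm, h]
end
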